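/- Let b ∈ ℕ⁺, τ ∈ {τ_ZPT^b, τ_ZPPT^b, τ_RZPT^b}, let A be a TS with event set E = {e₁,…,e_n} and let A' be a spanning tree of A. An SSA (s, s') of A is solved by some τ-region of A if and only if there is an abstract signature abs of A with ψ_s·abs ≠ ψ_{s'}·abs. -/

import Mathlib

namespace PNS

/-- Events of a (b-bounded) type of nets: either a pair `(m,n)` or a group element `z ∈ {0,…,b}`. -/
inductive BEvent : Type
  | pair : ℕ → ℕ → BEvent
  | num : ℕ → BEvent
  deriving DecidableEq

/-- A type of nets `τ = (S_τ, E_τ, δ_τ)` with `S_τ ⊆ ℕ`. -/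
structure NetType : Type where
  states : Set ℕ
  events : Set BEvent
  delta : ℕ → BEvent → Option ℕ

def deltaPT (b : ℕ) : ℕ → BEvent → Option ℕ
  | s, .pair m n => if m ≤ s ∧ s - m + n ≤ b then some (s - m + n) else none
  | _, .num _ => none

def deltaZPT (b : ℕ) : ℕ → BEvent → Option ℕ
  | s, .pair m n => if m ≤ s ∧ s - m + n ≤ b then some (s - m + n) else none
  | s, .num z => some ((s + z) % (b + 1))

def deltaRZPT (b : ℕ) : ℕ → BEvent → Option ℕ
  | s, .pair m n => if s = m ∧ n ≤ b then some n else none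
  | s, .num z => some ((s + z) % (b + 1))

/-- The type of `b`-bounded P/T-nets. -/
def tauPT (b : ℕ) : NetType :=
  ⟨{s | s ≤ b}, {e | ∃ m n, e = BEvent.pair m n ∧ m ≤ b ∧ n ≤ b}, deltaPT b⟩

/-- The type of pure `b`-bounded P/T-nets. -/
def tauPPT (b : ℕ) : NetType :=
  ⟨{s | s ≤ b}, {e | ∃ m n, e = BEvent.pair m n ∧ m ≤ b ∧ n ≤ b ∧ (m = 0 ∨ n = 0)}, deltaPT b⟩

/-- The type of `ℤ_{b+1}`-extended `b`-bounded P/T-nets. -/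
def tauZPT (b : ℕ) : NetType :=
  ⟨{s | s ≤ b},
   {e | (∃ m n, e = BEvent.pair m n ∧ m ≤ b ∧ n ≤ b ∧ ¬(m = 0 ∧ n = 0)) ∨
        (∃ z, e = BEvent.num z ∧ z ≤ b)}, deltaZPT b⟩

/-- The type of pure `ℤ_{b+1}`-extended `b`-bounded P/T-nets. -/
def tauZPPT (b : ℕ) : NetType :=
  ⟨{s | s ≤ b},
   {e | (∃ m n, e = BEvent.pair m n ∧ m ≤ b ∧ n ≤ b ∧ ¬(m = 0 ∧ n = 0) ∧ (m = 0 ∨ n = 0)) ∨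
        (∃ z, e = BEvent.num z ∧ z ≤ b)}, deltaZPT b⟩

/-- The type of restricted `ℤ_{b+1}`-extended `b`-bounded P/T-nets. -/
def tauRZPT (b : ℕ) : NetType :=
  ⟨{s | s ≤ b},
   {e | (∃ m n, e = BEvent.pair m n ∧ m ≤ b ∧ n ≤ b ∧ ¬(m = 0 ∧ n = 0)) ∨
        (∃ z, e = BEvent.num z ∧ z ≤ b)}, deltaRZPT b⟩

/-- A (deterministic, initialized) transition system with states `S`, events `E`. -/
structure TS (S E : Type) : Type where
  delta : S → E → Option S
  init : S

def TS.Reachable {S E : Type} (A : TS S E) (s : S) : Prop :=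
  Relation.ReflTransGen (fun x y => ∃ e, A.delta x e = some y) A.init s

/-- Every state is reachable from the initial state. -/
def TS.Initialized {S E : Type} (A : TS S E) : Prop :=
  ∀ s, A.Reachable s

/-- A `τ`-region `(sup, sig)` of a TS `A`. -/
structure IsRegion (τ : NetType) {S E : Type} (A : TS S E)
    (sup : S → ℕ) (sig : E → BEvent) : Prop where
  sup_mem : ∀ s, sup s ∈ τ.states
  sig_mem : ∀ e, sig e ∈ τ.events
  edge : ∀ s e s', A.delta s e = some s' → τ.delta (sup s) (sig e) = some (sup s')

/-- `A` has the `τ`-state separation property. -/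
def HasSSP (τ : NetType) {S E : Type} (A : TS S E) : Prop :=
  ∀ s s' : S, s ≠ s' → ∃ sup sig, IsRegion τ A sup sig ∧ sup s ≠ sup s'

/-- `A` has the `τ`-event state separation property. -/
def HasESSP (τ : NetType) {S E : Type} (A : TS S E) : Prop :=
  ∀ (e : E) (s : S), A.delta s e = none →
    ∃ sup sig, IsRegion τ A sup sig ∧ τ.delta (sup s) (sig e) = none

def Solvable (τ : NetType) {S E : Type} (A : TS S E) : Prop :=
  HasESSP τ A ∧ HasSSP τ A

def sigMinus : BEvent → ℕ
  | .pair m _ => m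
  | .num _ => 0

def sigPlus : BEvent → ℕ
  | .pair _ n => n
  | .num _ => 0

def sigAbs : BEvent → ℕ
  | .pair _ _ => 0
  | .num z => z

open Classical in
/-- The linear TS `s₀ −ev 0→ s₁ −ev 1→ … −ev (m-1)→ s_m` on the `m+1` pairwise
distinct states `Fin (m+1)` with initial state `0`. -/
noncomputable def linTS {E : Type} (m : ℕ) (ev : ℕ → E) : TS (Fin (m + 1)) E where
  init := ⟨0, Nat.succ_pos m⟩
  delta s e :=
    if h : (s : ℕ) < m ∧ ev (s : ℕ) = e then some ⟨(s : ℕ) + 1, Nat.succ_lt_succ h.1⟩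
    else none

/-- The linear TS whose sequence of edge labels is the list `l`. -/
noncomputable def linOfList {E : Type} (l : List E) (d : E) : TS (Fin (l.length + 1)) E :=
  linTS l.length (fun i => l.getD i d)

/-- A spanning tree of `A`, represented by the parent function of the tree,
a depth function witnessing well-foundedness, and the Parikh vectors `count s`
of the unique tree paths from the initial state to the states. -/
structure SpanTree {S E : Type} [DecidableEq E] (A : TS S E) : Type where
  parent : S → Option (S × E)
  depth : S → ℕ
  count : S → E → ℕ
  parent_init : parent A.init = none
  parent_ne : ∀ s, s ≠ A.init → ∃ p e, parent s = some (p, e)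
  parent_edge : ∀ s p e, parent s = some (p, e) → A.delta p e = some s
  depth_lt : ∀ s p e, parent s = some (p, e) → depth p < depth s
  count_init : ∀ e, count A.init e = 0
  count_parent : ∀ s p e0 e, parent s = some (p, e0) →
    count s e = count p e + (if e = e0 then 1 else 0)

/-- `abs` is an abstract signature of `A` (w.r.t. the bound `b`): some support
`sup` turns it into an abstract region, i.e. `sup s' = sup s + abs e (mod b+1)`
for every edge `s −e→ s'`. -/
def AbstractSig (b : ℕ) {S E : Type} (A : TS S E) (abs : E → ZMod (b + 1)) : Prop :=
  ∃ sup : S → ZMod (b + 1), ∀ s e s', A.delta s e = some s' → sup s' = sup s + abs e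

/-- `s −e→ s'` is a chord of the spanning tree `T`: an edge of `A` that is not a tree edge. -/
def IsChord {S E : Type} [DecidableEq E] {A : TS S E} (T : SpanTree A)
    (s : S) (e : E) (s' : S) : Prop :=
  A.delta s e = some s' ∧ T.parent s' ≠ some (s, e)

/-- The fundamental cycle `ψ_t` of the chord `t = s −e→ s'`, evaluated at the event `e'`. -/
noncomputable def fundCycle (b : ℕ) {S E : Type} [DecidableEq E] {A : TS S E}
    (T : SpanTree A) (s : S) (e : E) (s' : S) (e' : E) : ZMod (b + 1) :=
  ((T.count s e' : ZMod (b + 1)) - (T.count s' e' : ZMod (b + 1))) +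
    (if e' = e then 1 else 0)

/-!
Modulo `b + 1`, every event of the three types of nets translates the states by a constant, and
every translation occurs as an everywhere defined event. Hence reducing a region modulo `b + 1`
gives an abstract region, every abstract region comes from a region, and neither passage changes
which states are separated, since distinct states in `{0, …, b}` stay distinct modulo `b + 1`.
Following the tree path from the initial state to `s`, an abstract region satisfies
`sup s = sup ι + ψ_s · abs`, so it separates `s` and `s'` exactly when `ψ_s · abs ≠ ψ_{s'} · abs`.
-/

section Translation

variable {b : ℕ} {τ : NetType}

/-- `τ` acts by translations of `ℤ_{b+1}`: its states are the representatives `0, …, b`, each event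
is a partial translation modulo `b + 1`, and each translation is the total action of some event.
This is all that the three extended types of nets contribute to state separation. -/
structure ActsByTranslations (b : ℕ) (τ : NetType) : Prop where
  states_eq : τ.states = Set.Iic b
  exists_shift : ∀ e ∈ τ.events, ∃ c : ZMod (b + 1), ∀ x y,
    τ.delta x e = some y → (y : ZMod (b + 1)) = x + c
  exists_total : ∀ c : ZMod (b + 1), ∃ e ∈ τ.events, ∀ x : ZMod (b + 1),
    τ.delta x.val e = some (x + c).val

theorem exists_shift_of_deltaZPT (b : ℕ) (e : BEvent) :
    ∃ c : ZMod (b + 1), ∀ x y, deltaZPT b x e = some y → (y : ZMod (b + 1)) = x + c := by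
  cases e with
  | pair m n =>
    refine ⟨n - m, fun x y h => ?_⟩
    obtain ⟨⟨hmx, -⟩, rfl⟩ : (m ≤ x ∧ x - m + n ≤ b) ∧ x - m + n = y := by
      simpa only [deltaZPT, Option.ite_none_right_eq_some, Option.some.injEq] using h
    push_cast [Nat.cast_sub hmx]
    ring
  | num z =>
    refine ⟨z, fun x y h => ?_⟩
    obtain rfl : (x + z) % (b + 1) = y := Option.some.inj h
    rw [ZMod.natCast_mod, Nat.cast_add]

theorem deltaZPT_eq_some_of_deltaRZPT {x y : ℕ} {e : BEvent} (h : deltaRZPT b x e = some y) :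
    deltaZPT b x e = some y := by
  cases e with
  | pair m n =>
    obtain ⟨⟨rfl, hnb⟩, rfl⟩ : (x = m ∧ n ≤ b) ∧ n = y := by
      simpa only [deltaRZPT, Option.ite_none_right_eq_some, Option.some.injEq] using h
    simp [deltaZPT, hnb]
  | num z => exact h

theorem ActsByTranslations.of_deltaZPT (states_eq : τ.states = Set.Iic b)
    (num_mem : ∀ z ≤ b, .num z ∈ τ.events)
    (delta_num : ∀ x z, τ.delta x (.num z) = deltaZPT b x (.num z))
    (delta_le : ∀ x e y, τ.delta x e = some y → deltaZPT b x e = some y) :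
    ActsByTranslations b τ where
  states_eq := states_eq
  exists_shift e _ :=
    let ⟨c, hc⟩ := exists_shift_of_deltaZPT b e
    ⟨c, fun x y h => hc x y (delta_le x e y h)⟩
  exists_total c := by
    refine ⟨.num c.val, num_mem _ (Nat.le_of_lt_succ c.val_lt), fun x => ?_⟩
    rw [delta_num, deltaZPT, ZMod.val_add]

theorem actsByTranslations_tauZPT (b : ℕ) : ActsByTranslations b (tauZPT b) :=
  .of_deltaZPT rfl (fun z hz => .inr ⟨z, rfl, hz⟩) (fun _ _ => rfl) (fun _ _ _ h => h)

theorem actsByTranslations_tauZPPT (b : ℕ) : ActsByTranslations b (tauZPPT b) :=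
  .of_deltaZPT rfl (fun z hz => .inr ⟨z, rfl, hz⟩) (fun _ _ => rfl) (fun _ _ _ h => h)

theorem actsByTranslations_tauRZPT (b : ℕ) : ActsByTranslations b (tauRZPT b) :=
  .of_deltaZPT rfl (fun z hz => .inr ⟨z, rfl, hz⟩) (fun _ _ => rfl)
    (fun _ _ _ h => deltaZPT_eq_some_of_deltaRZPT h)

theorem actsByTranslations_of_eq (hτ : τ = tauZPT b ∨ τ = tauZPPT b ∨ τ = tauRZPT b) :
    ActsByTranslations b τ := by
  rcases hτ with rfl | rfl | rfl
  exacts [actsByTranslations_tauZPT b, actsByTranslations_tauZPPT b, actsByTranslations_tauRZPT b]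

end Translation

section Region

variable {b : ℕ} {τ : NetType} {S E : Type} {A : TS S E}

/-- An abstract region `(sup, abs)` of `A`, with values in any additive structure `M` in place of
`ℤ_{b+1}`; `AbstractSig b A abs` says that `abs` belongs to one with `M = ZMod (b + 1)`. -/
def IsAbstractRegion {M : Type*} [Add M] (A : TS S E) (sup : S → M) (abs : E → M) : Prop :=
  ∀ s e s', A.delta s e = some s' → sup s' = sup s + abs e

theorem IsRegion.exists_isAbstractRegion (hτ : ActsByTranslations b τ) {sup : S → ℕ}
    {sig : E → BEvent} (h : IsRegion τ A sup sig) :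
    ∃ abs, IsAbstractRegion A (fun s => (sup s : ZMod (b + 1))) abs := by
  choose abs habs using fun e => hτ.exists_shift (sig e) (h.sig_mem e)
  exact ⟨abs, fun s e s' hse => habs e _ _ (h.edge s e s' hse)⟩

theorem IsAbstractRegion.exists_isRegion (hτ : ActsByTranslations b τ) {sup : S → ZMod (b + 1)}
    {abs : E → ZMod (b + 1)} (h : IsAbstractRegion A sup abs) :
    ∃ sig, IsRegion τ A (fun s => (sup s).val) sig := by
  choose sig sig_mem hsig using fun e => hτ.exists_total (abs e)
  refine ⟨sig, fun s => ?_, sig_mem, fun s e s' hse => ?_⟩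
  · exact hτ.states_eq ▸ Nat.le_of_lt_succ (sup s).val_lt
  · rw [h s e s' hse, hsig]

theorem IsRegion.natCast_sup_inj (hτ : ActsByTranslations b τ) {sup : S → ℕ} {sig : E → BEvent}
    (h : IsRegion τ A sup sig) {s s' : S} :
    (sup s : ZMod (b + 1)) = sup s' ↔ sup s = sup s' := by
  have sup_lt (t : S) : sup t < b + 1 := by
    simpa only [hτ.states_eq, Set.mem_Iic, Nat.lt_succ_iff] using h.sup_mem t
  exact (CharP.natCast_injOn_Iio (ZMod (b + 1)) (b + 1)).eq_iff (sup_lt s) (sup_lt s')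

theorem exists_isRegion_sup_ne_iff (hτ : ActsByTranslations b τ) {s s' : S} :
    (∃ sup sig, IsRegion τ A sup sig ∧ sup s ≠ sup s') ↔
      ∃ (sup : S → ZMod (b + 1)) (abs : E → ZMod (b + 1)),
        IsAbstractRegion A sup abs ∧ sup s ≠ sup s' := by
  constructor
  · rintro ⟨sup, sig, hregion, hne⟩
    obtain ⟨abs, habs⟩ := hregion.exists_isAbstractRegion hτ
    exact ⟨_, abs, habs, (hregion.natCast_sup_inj hτ).not.mpr hne⟩
  · rintro ⟨sup, abs, habs, hne⟩
    obtain ⟨sig, hregion⟩ := habs.exists_isRegion hτ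
    exact ⟨_, sig, hregion, (ZMod.val_injective _).ne hne⟩

end Region

section SpanningTree

variable {S E : Type} {M : Type*} [DecidableEq E] {A : TS S E} (T : SpanTree A)

@[elab_as_elim]
theorem SpanTree.induction {motive : S → Prop} (init : motive A.init)
    (step : ∀ t p e, T.parent t = some (p, e) → motive p → motive t) (t : S) : motive t := by
  by_cases ht : t = A.init
  · exact ht ▸ init
  · obtain ⟨p, e, hp⟩ := T.parent_ne t ht
    exact step t p e hp (SpanTree.induction init step p)
termination_by T.depth t
decreasing_by exact T.depth_lt t p e hp

theorem SpanTree.count_eq_add_single {t p : S} {e : E} (hp : T.parent t = some (p, e)) :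
    T.count t = T.count p + Pi.single e 1 := by
  ext e'
  rw [T.count_parent t p e e' hp, Pi.add_apply, Pi.single_apply]

theorem SpanTree.finite_support_count (t : S) : (T.count t).support.Finite := by
  induction t using T.induction with
  | init => simp [funext T.count_init]
  | step t p e hp ih =>
    rw [T.count_eq_add_single hp]
    have support_single_finite : (Pi.single e 1 : E → ℕ).support.Finite :=
      (Set.finite_singleton e).subset Pi.support_single_subset
    exact (ih.union support_single_finite).subset (Function.support_add _ _)

/-- The Parikh vector `ψ_t` of the tree path to `t`, as a finitely supported function, so that
`ψ_t · abs` makes sense without finiteness of the event set. It is not reduced modulo `b + 1`. -/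
noncomputable def SpanTree.parikh (t : S) : E →₀ ℕ :=
  .ofSupportFinite (T.count t) (T.finite_support_count t)

theorem SpanTree.parikh_init : T.parikh A.init = 0 :=
  Finsupp.ext T.count_init

theorem SpanTree.parikh_eq_add_single {t p : S} {e : E} (hp : T.parent t = some (p, e)) :
    T.parikh t = T.parikh p + .single e 1 := by
  apply DFunLike.coe_injective
  rw [Finsupp.coe_add, Finsupp.single_eq_pi_single]
  exact T.count_eq_add_single hp

theorem SpanTree.linearCombination_parikh_eq_sum_count [Fintype E] [Semiring M] (abs : E → M)
    (t : S) :
    Finsupp.linearCombination ℕ abs (T.parikh t) = ∑ e, (T.count t e : M) * abs e := by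
  simp_rw [← nsmul_eq_mul]
  exact Finsupp.sum_fintype _ _ fun e => zero_nsmul (abs e)

theorem IsAbstractRegion.sup_eq [AddCommMonoid M] {sup : S → M} {abs : E → M}
    (h : IsAbstractRegion A sup abs) (t : S) :
    sup t = sup A.init + Finsupp.linearCombination ℕ abs (T.parikh t) := by
  induction t using T.induction with
  | init => rw [T.parikh_init, map_zero, add_zero]
  | step t p e hp ih =>
    rw [h p e t (T.parent_edge t p e hp), ih, T.parikh_eq_add_single hp, map_add,
      Finsupp.linearCombination_single, one_smul, add_assoc]

theorem IsAbstractRegion.sup_inj [AddCommMonoid M] [IsLeftCancelAdd M] {sup : S → M} {abs : E → M}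
    (h : IsAbstractRegion A sup abs) {s s' : S} :
    sup s = sup s' ↔ Finsupp.linearCombination ℕ abs (T.parikh s) =
      Finsupp.linearCombination ℕ abs (T.parikh s') := by
  rw [h.sup_eq T s, h.sup_eq T s', add_right_inj]

theorem stmt17_general {b : ℕ} {τ : NetType} (hτ : ActsByTranslations b τ) (s s' : S) :
    (∃ sup sig, IsRegion τ A sup sig ∧ sup s ≠ sup s') ↔
      ∃ abs : E → ZMod (b + 1), AbstractSig b A abs ∧
        Finsupp.linearCombination ℕ abs (T.parikh s) ≠
          Finsupp.linearCombination ℕ abs (T.parikh s') := by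
  rw [exists_isRegion_sup_ne_iff hτ]
  constructor
  · rintro ⟨sup, abs, habs, hne⟩
    exact ⟨abs, ⟨sup, habs⟩, (habs.sup_inj T).not.mp hne⟩
  · rintro ⟨abs, ⟨sup, (habs : IsAbstractRegion A sup abs)⟩, hne⟩
    exact ⟨sup, abs, habs, (habs.sup_inj T).not.mpr hne⟩

end SpanningTree

/-- Let `τ ∈ {τ_ZPT^b, τ_ZPPT^b, τ_RZPT^b}` and let `T` be a
spanning tree of `A`.  An SSA `(s, s')` of `A` is solved by some `τ`-region of `A`
iff there is an abstract signature `abs` of `A` with `ψ_s · abs ≠ ψ_{s'} · abs`. -/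
theorem stmt17 (b : ℕ) (hb : 1 ≤ b) (τ : NetType)
    (hτ : τ = tauZPT b ∨ τ = tauZPPT b ∨ τ = tauRZPT b)
    {S E : Type} [Fintype E] [DecidableEq E] (A : TS S E) (hinit : A.Initialized)
    (T : SpanTree A) (s s' : S) (hss : s ≠ s') :
    (∃ sup sig, IsRegion τ A sup sig ∧ sup s ≠ sup s') ↔
      ∃ abs : E → ZMod (b + 1), AbstractSig b A abs ∧
        (∑ e : E, (T.count s e : ZMod (b + 1)) * abs e) ≠
          ∑ e : E, (T.count s' e : ZMod (b + 1)) * abs e := by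
  simpa only [T.linearCombination_parikh_eq_sum_count] using
    stmt17_general T (actsByTranslations_of_eq hτ) s s'

end PNS
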